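/- arXiv:2101.02589 — 7 statements merged into one kernel-verified Lean document; each statement's English description precedes it below -/
import Mathlib

section
/- Let P ⊆ ℝ^n be a convex set, let φ : P → ℝ be convex, let x₀ ∈ P, set m := φ(x₀), and let a, b ∈ ℝ with m < a < b. Then the sublevel set {x ∈ P : φ(x) ≤ b} is contained in the dilated set x₀ + ((b−m)/(a−m)) · ({x ∈ P : φ(x) ≤ a} − x₀), where for a set S ⊆ ℝ^n and λ > 0, x₀ + λ·(S − x₀) denotes {x₀ + λ(s − x₀) : s ∈ S}. -/
open MeasureTheory Set

/-! Dilating by the factor `(b - m) / (a - m)` is undone by contracting towards `x₀` with ratio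
`t = (a - m) / (b - m) ∈ [0, 1]`. Since the epigraph of `φ` is convex, a contraction with ratio `t`
pulls the level `b` down to the point of ratio `t` between `m = φ x₀` and `b`, which is exactly
`a`. -/

open AffineMap (homothety lineMap)

theorem subset_image_homothety_of_mapsTo_inv {𝕜 V Q : Type*}
    [Field 𝕜] [AddCommGroup V] [Module 𝕜 V] [AddTorsor V Q]
    {c : Q} {r : 𝕜} (hr : r ≠ 0) {S T : Set Q}
    (h : MapsTo (homothety c r⁻¹) S T) : S ⊆ homothety c r '' T := fun x hx =>
  ⟨homothety c r⁻¹ x, h hx,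
    (AffineMap.homothety_eq_iff_of_mul_eq_one (inv_mul_cancel₀ hr)).1 rfl⟩

theorem mapsTo_lineMap_sublevel {𝕜 E β : Type*}
    [Ring 𝕜] [PartialOrder 𝕜] [AddRightMono 𝕜] [AddCommGroup E] [Module 𝕜 E]
    [AddCommGroup β] [PartialOrder β] [IsOrderedAddMonoid β] [Module 𝕜 β] [PosSMulMono 𝕜 β]
    {s : Set E} {f : E → β} (hf : ConvexOn 𝕜 s f)
    {x₀ : E} (hx₀ : x₀ ∈ s) (b : β) {t : 𝕜} (ht : t ∈ Icc 0 1) :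
    MapsTo (lineMap x₀ · t) {x ∈ s | f x ≤ b} {x ∈ s | f x ≤ lineMap (f x₀) b t} := by
  intro x hx
  have h := hf.convex_epigraph.lineMap_mem (x := (x₀, f x₀)) (y := (x, b)) ⟨hx₀, le_rfl⟩ hx ht
  simpa only [AffineMap.fst_lineMap, AffineMap.snd_lineMap, mem_ofPred_eq] using h

theorem stmt_2_general {𝕜 E : Type*}
    [Field 𝕜] [LinearOrder 𝕜] [IsStrictOrderedRing 𝕜] [AddCommGroup E] [Module 𝕜 E]
    {s : Set E} {f : E → 𝕜} (hf : ConvexOn 𝕜 s f) {x₀ : E} (hx₀ : x₀ ∈ s)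
    {a b : 𝕜} (ha : f x₀ < a) (hab : a ≤ b) :
    {x ∈ s | f x ≤ b} ⊆
      homothety x₀ ((b - f x₀) / (a - f x₀)) '' {x ∈ s | f x ≤ a} := by
  have ha' : 0 < a - f x₀ := sub_pos.2 ha
  have hb' : 0 < b - f x₀ := sub_pos.2 (ha.trans_le hab)
  have ht : (a - f x₀) / (b - f x₀) ∈ Icc (0 : 𝕜) 1 :=
    ⟨by positivity, (div_le_one hb').2 (sub_le_sub_right hab _)⟩
  have hlevel : lineMap (f x₀) b ((a - f x₀) / (b - f x₀)) = a := by
    rw [AffineMap.lineMap_apply_ring', div_mul_cancel₀ _ hb'.ne', sub_add_cancel]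
  apply subset_image_homothety_of_mapsTo_inv (div_pos hb' ha').ne'
  simpa only [inv_div, hlevel, AffineMap.homothety_eq_lineMap, MapsTo] using
    mapsTo_lineMap_sublevel hf hx₀ b ht

/-- Sublevel set inclusion under dilation about a point, for a convex function. -/
theorem stmt_2 (n : ℕ) (P : Set (Fin n → ℝ)) (hcv : Convex ℝ P)
    (φ : (Fin n → ℝ) → ℝ) (hφ : ConvexOn ℝ P φ)
    (x₀ : Fin n → ℝ) (hx₀ : x₀ ∈ P) (a b : ℝ) (ha : φ x₀ < a) (hab : a < b) :
    {x ∈ P | φ x ≤ b} ⊆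
      (fun s => x₀ + ((b - φ x₀) / (a - φ x₀)) • (s - x₀)) '' {x ∈ P | φ x ≤ a} := by
  simpa only [AffineMap.coe_homothety, vsub_eq_sub, vadd_eq_add, add_comm _ x₀] using
    stmt_2_general hφ hx₀ ha hab.le
end

section
/- Let n ≥ 1, let P ⊆ ℝ^n be a nonempty bounded open convex set, let φ : P → ℝ be convex, and set m := inf_P φ (which is finite). Then for all a, b ∈ ℝ with m < a < b one has μ(P_b) ≤ ((b − m)/(a − m))^n · μ(P_a), where P_c := {x ∈ P : φ(x) ≤ c} and μ is Lebesgue measure on ℝ^n. -/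
open MeasureTheory Set

/-!
Fix a level `c` with `m < c < a` and a point `y ∈ P` with `φ y < c`. By convexity the homothety of
centre `y` and ratio `t = (a - c) / (b - c)` maps `P_b` into `P_a`, because `(1 - t) c + t b = a`.
It scales volumes by `t ^ n`, so `μ(P_b) ≤ ((b - c) / (a - c)) ^ n μ(P_a)`. Now let `c` decrease
to `m`; the limit is needed because `m` need not be attained on `P`.
-/

section OrderedField

variable {𝕜 E β : Type*} [Field 𝕜] [LinearOrder 𝕜] [IsStrictOrderedRing 𝕜]
  [AddCommGroup E] [Module 𝕜 E]
  [AddCommGroup β] [PartialOrder β] [IsOrderedAddMonoid β] [Module 𝕜 β] [PosSMulMono 𝕜 β]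

lemma image_homothety_sublevel_subset {s : Set E} {f : E → β} (hf : ConvexOn 𝕜 s f)
    {y : E} (hy : y ∈ s) {b c : β} (hyc : f y ≤ c) {t : 𝕜} (ht₀ : 0 ≤ t) (ht₁ : t ≤ 1) :
    AffineMap.homothety y t '' {x ∈ s | f x ≤ b} ⊆ {x ∈ s | f x ≤ AffineMap.lineMap c b t} := by
  rintro _ ⟨x, ⟨hx, hxb⟩, rfl⟩
  have ht₁' : 0 ≤ 1 - t := sub_nonneg.2 ht₁
  have hsum : 1 - t + t = 1 := sub_add_cancel 1 t
  rw [AffineMap.homothety_eq_lineMap, mem_ofPred, AffineMap.lineMap_apply_module,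
    AffineMap.lineMap_apply_module]
  refine ⟨hf.1 hy hx ht₁' ht₀ hsum, ?_⟩
  calc f ((1 - t) • y + t • x)
      ≤ (1 - t) • f y + t • f x := hf.2 hy hx ht₁' ht₀ hsum
    _ ≤ (1 - t) • c + t • b := by gcongr

end OrderedField

section Measure

variable {E : Type*} [NormedAddCommGroup E] [NormedSpace ℝ E] [FiniteDimensional ℝ E]
  [MeasurableSpace E] [BorelSpace E] (μ : Measure E) [μ.IsAddHaarMeasure]
  {s : Set E} {f : E → ℝ}

lemma ofReal_pow_finrank_mul_measure_sublevel_le (hf : ConvexOn ℝ s f) {y : E} (hy : y ∈ s)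
    {b c : ℝ} (hyc : f y ≤ c) {t : ℝ} (ht₀ : 0 ≤ t) (ht₁ : t ≤ 1) :
    ENNReal.ofReal (t ^ Module.finrank ℝ E) * μ {x ∈ s | f x ≤ b} ≤
      μ {x ∈ s | f x ≤ AffineMap.lineMap c b t} :=
  calc ENNReal.ofReal (t ^ Module.finrank ℝ E) * μ {x ∈ s | f x ≤ b}
      = μ (AffineMap.homothety y t '' {x ∈ s | f x ≤ b}) := by
        rw [Measure.addHaar_image_homothety, abs_of_nonneg (pow_nonneg ht₀ _)]
    _ ≤ μ {x ∈ s | f x ≤ AffineMap.lineMap c b t} :=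
        measure_mono (image_homothety_sublevel_subset hf hy hyc ht₀ ht₁)

lemma measure_sublevel_le_of_apply_le (hf : ConvexOn ℝ s f) {y : E} (hy : y ∈ s)
    {a b c : ℝ} (hyc : f y ≤ c) (hca : c < a) (hab : a ≤ b) :
    μ {x ∈ s | f x ≤ b} ≤
      ENNReal.ofReal (((b - c) / (a - c)) ^ Module.finrank ℝ E) * μ {x ∈ s | f x ≤ a} := by
  have hac : 0 < a - c := sub_pos.2 hca
  have hbc : 0 < b - c := sub_pos.2 (hca.trans_le hab)
  set t := (a - c) / (b - c) with ht
  have ht₀ : 0 < t := div_pos hac hbc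
  have ht₁ : t ≤ 1 := (div_le_one hbc).2 (sub_le_sub_right hab c)
  have hta : AffineMap.lineMap c b t = a := by
    rw [AffineMap.lineMap_apply_ring', ht, div_mul_cancel₀ _ hbc.ne', sub_add_cancel]
  have hscale := ofReal_pow_finrank_mul_measure_sublevel_le μ hf hy (b := b) hyc ht₀.le ht₁
  have htpos : 0 < t ^ Module.finrank ℝ E := pow_pos ht₀ _
  rwa [hta, ENNReal.mul_le_iff_le_inv (ENNReal.ofReal_pos.2 htpos).ne' ENNReal.ofReal_ne_top,
    ← ENNReal.ofReal_inv_of_pos htpos, ← inv_pow, ht, inv_div] at hscale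

/-- The hypothesis `hm` says that `m` is at least the infimum of `f` on `s`, taken in `[-∞, ∞]`. -/
theorem stmt_3_general (hf : ConvexOn ℝ s f) {m a b : ℝ} (hm : ∀ c, m < c → ∃ y ∈ s, f y < c)
    (hma : m < a) (hab : a ≤ b) :
    μ {x ∈ s | f x ≤ b} ≤
      ENNReal.ofReal (((b - m) / (a - m)) ^ Module.finrank ℝ E) * μ {x ∈ s | f x ≤ a} := by
  have ham : 0 < a - m := sub_pos.2 hma
  have hbm : 0 < b - m := sub_pos.2 (hma.trans_le hab)
  have hratio : ContinuousAt (fun c ↦ ((b - c) / (a - c)) ^ Module.finrank ℝ E) m := by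
    fun_prop (disch := exact ham.ne')
  have hbound : ContinuousAt (fun c ↦ ENNReal.ofReal (((b - c) / (a - c)) ^ Module.finrank ℝ E) *
      μ {x ∈ s | f x ≤ a}) m :=
    ENNReal.Tendsto.mul_const (ENNReal.tendsto_ofReal hratio)
      (.inl (ENNReal.ofReal_pos.2 (by positivity)).ne')
  refine ge_of_tendsto (hbound.mono_left (nhdsWithin_le_nhds (s := Ioi m))) ?_
  filter_upwards [Ioo_mem_nhdsGT hma] with c ⟨hmc, hca⟩
  obtain ⟨y, hy, hyc⟩ := hm c hmc
  exact measure_sublevel_le_of_apply_le μ hf hy hyc.le hca hab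

end Measure

/-- Volume growth of sublevel sets of a convex function on a bounded open convex set:
`μ(P_b) ≤ ((b - m)/(a - m))^n μ(P_a)` for `m = inf_P φ < a < b`. -/
theorem stmt_3 (n : ℕ) (hn : 1 ≤ n) (P : Set (Fin n → ℝ))
    (hne : P.Nonempty) (hbd : Bornology.IsBounded P) (hop : IsOpen P) (hcv : Convex ℝ P)
    (φ : (Fin n → ℝ) → ℝ) (hφ : ConvexOn ℝ P φ)
    (a b : ℝ) (ha : sInf (φ '' P) < a) (hab : a < b) :
    volume {x ∈ P | φ x ≤ b} ≤
      ENNReal.ofReal (((b - sInf (φ '' P)) / (a - sInf (φ '' P))) ^ n) *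
        volume {x ∈ P | φ x ≤ a} := by
  simpa only [Module.finrank_fin_fun] using stmt_3_general volume hφ
    (fun _ hc ↦ exists_mem_image.1 (exists_lt_of_csInf_lt (hne.image φ) hc)) ha hab.le
end

section
/- Let n ≥ 1, let P ⊆ ℝ^n be a nonempty bounded open convex set, and let φ : P → ℝ be a convex function that is Lebesgue-integrable on P with ∫_P φ dμ = 0 and inf_P φ = −1. Then ∫_P |φ| dμ ≥ (2/(n+1)) · μ(P_−), where P_− := {x ∈ P : φ(x) ≤ 0}. -/
open MeasureTheory Set

/-!
Half of `∫_P |φ| - ∫_P φ` is the integral of the negative part of `φ`, that is, of `f = -φ` over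
`A = P_-`. On `A` the function `f` is concave and nonnegative, so for `x₀ ∈ A` the homothety with
centre `x₀` and ratio `1 - t` maps `A` into the superlevel set `{t f(x₀) ≤ f}`, which therefore has
measure at least `(1 - t)^n μ(A)`. The layer-cake formula then gives
`∫_A f ≥ f(x₀) μ(A) / (n + 1)`, and `f(x₀)` can be taken arbitrarily close to `-inf_P φ`.
-/

lemma integral_abs_sub_integral_nonneg {α : Type*} [MeasurableSpace α] {μ : Measure α}
    {f : α → ℝ} (hf : Integrable f μ) : 0 ≤ ∫ x, |f x| ∂μ - ∫ x, f x ∂μ :=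
  sub_nonneg.2 (integral_mono hf hf.abs fun x => le_abs_self (f x))

lemma lintegral_ofReal_neg {α : Type*} [MeasurableSpace α] {μ : Measure α} {f : α → ℝ}
    (hf : Integrable f μ) :
    ∫⁻ x, ENNReal.ofReal (-f x) ∂μ = ENNReal.ofReal ((∫ x, |f x| ∂μ - ∫ x, f x ∂μ) / 2) := by
  have hneg (x : α) : ENNReal.ofReal (-f x) = ENNReal.ofReal ((|f x| - f x) / 2) := by
    rcases le_total (f x) 0 with hx | hx
    · congr 1
      rw [abs_of_nonpos hx]
      ring
    · simp [abs_of_nonneg hx, hx]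
  simp_rw [hneg]
  rw [← integral_sub hf.abs hf, ← integral_div]
  exact (ofReal_integral_eq_lintegral_ofReal ((hf.abs.sub hf).div_const 2)
    (Filter.Eventually.of_forall fun x =>
      div_nonneg (sub_nonneg.2 (le_abs_self (f x))) zero_le_two)).symm

lemma lintegral_one_sub_div_pow (n : ℕ) {c : ℝ} (hc : 0 < c) :
    ∫⁻ t in Ioc 0 c, ENNReal.ofReal ((1 - t / c) ^ n) = ENNReal.ofReal (c / (n + 1)) := by
  rw [← ofReal_integral_eq_lintegral_ofReal]
  · rw [← intervalIntegral.integral_of_le hc.le,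
      intervalIntegral.integral_comp_sub_div (fun x : ℝ => x ^ n) hc.ne']
    simp [hc.ne', div_eq_mul_inv]
  · exact (Continuous.integrableOn_Icc (by fun_prop)).mono_set Ioc_subset_Icc_self
  · filter_upwards [ae_restrict_mem measurableSet_Ioc] with t ht
    exact pow_nonneg (sub_nonneg.2 (div_le_one_of_le₀ ht.2 hc.le)) n

lemma homothety_image_subset_superlevel {E : Type*} [AddCommGroup E] [Module ℝ E]
    {s : Set E} {f : E → ℝ} (hf : ConcaveOn ℝ s f) (hf₀ : ∀ x ∈ s, 0 ≤ f x) {x₀ : E}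
    (hx₀ : x₀ ∈ s) {t : ℝ} (ht : t ∈ Icc (0 : ℝ) 1) :
    AffineMap.homothety x₀ (1 - t) '' s ⊆ {x ∈ s | t * f x₀ ≤ f x} := by
  rintro _ ⟨y, hy, rfl⟩
  have ht' : 0 ≤ 1 - t := sub_nonneg.2 ht.2
  have hcomb : AffineMap.homothety x₀ (1 - t) y = t • x₀ + (1 - t) • y := by
    simp only [AffineMap.homothety_apply, vsub_eq_sub, vadd_eq_add]
    module
  rw [hcomb]
  refine ⟨hf.1 hx₀ hy ht.1 ht' (by ring), ?_⟩
  calc t * f x₀ ≤ t * f x₀ + (1 - t) * f y :=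
        le_add_of_nonneg_right (mul_nonneg ht' (hf₀ y hy))
    _ ≤ f (t • x₀ + (1 - t) • y) := hf.2 hx₀ hy ht.1 ht' (by ring)

section AddHaar

variable {E : Type*} [NormedAddCommGroup E] [NormedSpace ℝ E] [FiniteDimensional ℝ E]
  [MeasurableSpace E] [BorelSpace E] (μ : Measure E) [μ.IsAddHaarMeasure]

lemma aemeasurable_restrict_of_concaveOn {s : Set E} {f : E → ℝ} (hf : ConcaveOn ℝ s f) :
    AEMeasurable f (μ.restrict s) := by
  rw [← Measure.restrict_congr_set
    (interior_ae_eq_of_null_frontier (hf.1.addHaar_frontier μ))]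
  exact hf.continuousOn_interior.aemeasurable isOpen_interior.measurableSet

lemma ofReal_one_sub_pow_mul_measure_le_measure_superlevel {s : Set E} {f : E → ℝ}
    (hf : ConcaveOn ℝ s f) (hf₀ : ∀ x ∈ s, 0 ≤ f x) {x₀ : E} (hx₀ : x₀ ∈ s) {t : ℝ}
    (ht : t ∈ Icc (0 : ℝ) 1) :
    ENNReal.ofReal ((1 - t) ^ Module.finrank ℝ E) * μ s ≤ μ {x ∈ s | t * f x₀ ≤ f x} := by
  rw [← abs_of_nonneg (pow_nonneg (sub_nonneg.2 ht.2) _), ← Measure.addHaar_image_homothety μ x₀]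
  exact measure_mono (homothety_image_subset_superlevel hf hf₀ hx₀ ht)

lemma ofReal_apply_div_mul_measure_le_setLIntegral {s : Set E} {f : E → ℝ}
    (hf : ConcaveOn ℝ s f) (hf₀ : ∀ x ∈ s, 0 ≤ f x) {x₀ : E} (hx₀ : x₀ ∈ s) :
    ENNReal.ofReal (f x₀ / (Module.finrank ℝ E + 1)) * μ s ≤
      ∫⁻ x in s, ENNReal.ofReal (f x) ∂μ := by
  obtain hzero | hpos := (hf₀ x₀ hx₀).eq_or_lt
  · simp [← hzero]
  have hs : NullMeasurableSet s μ := hf.1.nullMeasurableSet μ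
  have hsuperlevel (t : ℝ) (ht : t ∈ Ioc 0 (f x₀)) :
      ENNReal.ofReal ((1 - t / f x₀) ^ Module.finrank ℝ E) * μ s ≤
        μ.restrict s {x | t ≤ f x} := by
    have ht' : t / f x₀ ∈ Icc (0 : ℝ) 1 :=
      ⟨div_nonneg ht.1.le hpos.le, div_le_one_of_le₀ ht.2 hpos.le⟩
    have h := ofReal_one_sub_pow_mul_measure_le_measure_superlevel μ hf hf₀ hx₀ ht'
    rwa [div_mul_cancel₀ t hpos.ne', ofPred_and, ofPred_mem_eq, inter_comm,
      ← Measure.restrict_apply₀' hs] at h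
  calc ENNReal.ofReal (f x₀ / (Module.finrank ℝ E + 1)) * μ s
      = ∫⁻ t in Ioc 0 (f x₀), ENNReal.ofReal ((1 - t / f x₀) ^ Module.finrank ℝ E) * μ s := by
        rw [lintegral_mul_const _ (by fun_prop), lintegral_one_sub_div_pow _ hpos]
    _ ≤ ∫⁻ t in Ioc 0 (f x₀), μ.restrict s {x | t ≤ f x} :=
        setLIntegral_mono' measurableSet_Ioc hsuperlevel
    _ ≤ ∫⁻ t in Ioi 0, μ.restrict s {x | t ≤ f x} := lintegral_mono_set Ioc_subset_Ioi_self
    _ = ∫⁻ x in s, ENNReal.ofReal (f x) ∂μ :=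
        (lintegral_eq_lintegral_meas_le _ ((ae_restrict_mem₀ hs).mono hf₀)
          (aemeasurable_restrict_of_concaveOn μ hf)).symm

variable {μ}

lemma ofReal_neg_apply_div_mul_measure_nonpos_le {P : Set E} {φ : E → ℝ} (hφ : ConvexOn ℝ P φ)
    (hint : IntegrableOn φ P μ) {x₀ : E} (hx₀ : x₀ ∈ P) :
    ENNReal.ofReal (-φ x₀ / (Module.finrank ℝ E + 1)) * μ {x ∈ P | φ x ≤ 0} ≤
      ENNReal.ofReal ((∫ x in P, |φ x| ∂μ - ∫ x in P, φ x ∂μ) / 2) := by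
  obtain hpos | hnonpos := lt_or_ge 0 (φ x₀)
  · rw [ENNReal.ofReal_of_nonpos (div_nonpos_of_nonpos_of_nonneg (by linarith) (by positivity)),
      zero_mul]
    exact zero_le
  have hconcave : ConcaveOn ℝ {x ∈ P | φ x ≤ 0} fun x => -φ x :=
    (hφ.subset (sep_subset P _) (hφ.convex_le 0)).neg
  calc ENNReal.ofReal (-φ x₀ / (Module.finrank ℝ E + 1)) * μ {x ∈ P | φ x ≤ 0}
      ≤ ∫⁻ x in {x ∈ P | φ x ≤ 0}, ENNReal.ofReal (-φ x) ∂μ :=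
        ofReal_apply_div_mul_measure_le_setLIntegral μ hconcave
          (fun x hx => neg_nonneg.2 hx.2) ⟨hx₀, hnonpos⟩
    _ ≤ ∫⁻ x in P, ENNReal.ofReal (-φ x) ∂μ := lintegral_mono_set (sep_subset P _)
    _ = ENNReal.ofReal ((∫ x in P, |φ x| ∂μ - ∫ x in P, φ x ∂μ) / 2) :=
        lintegral_ofReal_neg hint

lemma measure_nonpos_lt_top {P : Set E} {φ : E → ℝ} (hφ : ConvexOn ℝ P φ)
    (hint : IntegrableOn φ P μ) {x₀ : E} (hx₀ : x₀ ∈ P)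
    (hneg : φ x₀ < 0) : μ {x ∈ P | φ x ≤ 0} < ⊤ := by
  have hcoeff : ENNReal.ofReal (-φ x₀ / (Module.finrank ℝ E + 1)) ≠ 0 :=
    (ENNReal.ofReal_pos.2 (div_pos (neg_pos.2 hneg) (by positivity))).ne'
  exact ENNReal.lt_top_of_mul_ne_top_right
    (ne_top_of_le_ne_top ENNReal.ofReal_ne_top
      (ofReal_neg_apply_div_mul_measure_nonpos_le hφ hint hx₀)) hcoeff

lemma neg_apply_mul_measureReal_nonpos_le {P : Set E} {φ : E → ℝ} (hφ : ConvexOn ℝ P φ)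
    (hint : IntegrableOn φ P μ) {x₀ : E} (hx₀ : x₀ ∈ P) :
    2 / (Module.finrank ℝ E + 1) * -φ x₀ * μ.real {x ∈ P | φ x ≤ 0} ≤
      ∫ x in P, |φ x| ∂μ - ∫ x in P, φ x ∂μ := by
  have hhalf : -φ x₀ / (Module.finrank ℝ E + 1) * μ.real {x ∈ P | φ x ≤ 0} ≤
      (∫ x in P, |φ x| ∂μ - ∫ x in P, φ x ∂μ) / 2 := by
    have h := ENNReal.toReal_mono ENNReal.ofReal_ne_top
      (ofReal_neg_apply_div_mul_measure_nonpos_le hφ hint hx₀)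
    rw [ENNReal.toReal_mul, ENNReal.toReal_ofReal', ENNReal.toReal_ofReal
      (div_nonneg (integral_abs_sub_integral_nonneg hint) zero_le_two)] at h
    exact (mul_le_mul_of_nonneg_right (le_max_left _ 0) measureReal_nonneg).trans h
  calc 2 / (Module.finrank ℝ E + 1) * -φ x₀ * μ.real {x ∈ P | φ x ≤ 0}
      = 2 * (-φ x₀ / (Module.finrank ℝ E + 1) * μ.real {x ∈ P | φ x ≤ 0}) := by ring
    _ ≤ ∫ x in P, |φ x| ∂μ - ∫ x in P, φ x ∂μ := by linarith

theorem stmt_4_general {P : Set E} (hne : P.Nonempty) {φ : E → ℝ} (hφ : ConvexOn ℝ P φ)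
    (hint : IntegrableOn φ P μ) {m : ℝ} (hm : 0 < m) (hinf : sInf (φ '' P) = -m) :
    μ {x ∈ P | φ x ≤ 0} < ⊤ ∧
      2 / (Module.finrank ℝ E + 1) * m * μ.real {x ∈ P | φ x ≤ 0} ≤
        ∫ x in P, |φ x| ∂μ - ∫ x in P, φ x ∂μ := by
  set I := ∫ x in P, |φ x| ∂μ - ∫ x in P, φ x ∂μ
  set c := 2 / (Module.finrank ℝ E + 1) * μ.real {x ∈ P | φ x ≤ 0} with hc
  constructor
  · obtain ⟨_, ⟨x₀, hx₀, rfl⟩, hneg⟩ :=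
      exists_lt_of_csInf_lt (hne.image φ) (hinf.trans_lt (neg_neg_of_pos hm))
    exact measure_nonpos_lt_top hφ hint hx₀ hneg
  · rw [mul_right_comm, ← hc]
    obtain hc₀ | hcpos : 0 = c ∨ 0 < c := (show 0 ≤ c by positivity).eq_or_lt
    · rw [← hc₀, zero_mul]
      exact integral_abs_sub_integral_nonneg hint
    have hlower : -(I / c) ≤ sInf (φ '' P) := by
      refine le_csInf (hne.image φ) (forall_mem_image.2 fun x hx => ?_)
      rw [neg_le, le_div_iff₀' hcpos, hc, mul_right_comm]
      exact neg_apply_mul_measureReal_nonpos_le hφ hint hx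
    rwa [hinf, neg_le_neg_iff, le_div_iff₀' hcpos] at hlower

end AddHaar

/-- Lower bound `∫_P |φ| ≥ (2/(n+1)) μ(P_-)` for a centered convex function with
`inf_P φ = -1`, where `P_- = {φ ≤ 0}`. -/
theorem stmt_4 (n : ℕ) (hn : 1 ≤ n) (P : Set (Fin n → ℝ))
    (hne : P.Nonempty) (hbd : Bornology.IsBounded P) (hop : IsOpen P) (hcv : Convex ℝ P)
    (φ : (Fin n → ℝ) → ℝ) (hφ : ConvexOn ℝ P φ)
    (hint : IntegrableOn φ P volume)
    (hzero : (∫ x in P, φ x) = 0)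
    (hinf : sInf (φ '' P) = -1) :
    (∫ x in P, |φ x|) ≥ (2 / (n + 1 : ℝ)) * (volume {x ∈ P | φ x ≤ 0}).toReal := by
  simpa [Measure.real, hzero] using (stmt_4_general hne hφ hint one_pos hinf).2
end

section
/- Let n ≥ 1, let P ⊆ ℝ^n be a nonempty bounded open convex set, and let φ : P → ℝ be a convex function that is Lebesgue-integrable on P with ∫_P φ dμ = 0 and inf_P φ = −1. Then for every b > 0 one has ∫_{P_+} φ dμ ≥ b·μ(P) − (((b+1)^{n+1} − 1)/(n+1)) · μ(P_−), where P_+ := {x ∈ P : φ(x) > 0} and P_− := {x ∈ P : φ(x) ≤ 0}. -/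
open MeasureTheory Set

/-!
Let `V t = μ {x ∈ P | φ x ≤ t}` and `inf φ = -m`. If `φ x₀ ≤ a < u ≤ t`, convexity makes the
homothety with centre `x₀` and ratio `(u - a) / (t - a)` map `{φ ≤ t}` into `{φ ≤ u}`; letting
`a → -m` gives `V t ≤ ((t + m) / m) ^ n * V 0`. The layer-cake formula for `φ` truncated to `[0, b]`
then yields `∫_{P_+} φ ≥ ∫₀ᵇ (μ P - V t) dt ≥ b * μ P - V 0 * ∫₀ᵇ ((t + m) / m) ^ n dt`.
-/

theorem mapsTo_homothety_sublevel {𝕜 E β : Type*} [CommRing 𝕜] [PartialOrder 𝕜] [IsOrderedRing 𝕜]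
    [AddCommGroup E] [Module 𝕜 E] [AddCommMonoid β] [PartialOrder β] [IsOrderedAddMonoid β]
    [Module 𝕜 β] [PosSMulMono 𝕜 β] {s : Set E} {f : E → β} (hf : ConvexOn 𝕜 s f) {x₀ : E}
    (hx₀ : x₀ ∈ s) {a : β} (hfx₀ : f x₀ ≤ a) {r : 𝕜} (hr₀ : 0 ≤ r) (hr₁ : r ≤ 1) (t : β) :
    MapsTo (AffineMap.homothety x₀ r) {x ∈ s | f x ≤ t}
      {x ∈ s | f x ≤ (1 - r) • a + r • t} := by
  rintro x ⟨hx, hfx⟩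
  have hr₁' : 0 ≤ 1 - r := sub_nonneg.mpr hr₁
  rw [AffineMap.homothety_eq_lineMap, AffineMap.lineMap_apply_module]
  refine ⟨hf.1 hx₀ hx hr₁' hr₀ (sub_add_cancel 1 r), ?_⟩
  calc f ((1 - r) • x₀ + r • x)
      ≤ (1 - r) • f x₀ + r • f x := hf.2 hx₀ hx hr₁' hr₀ (sub_add_cancel 1 r)
    _ ≤ (1 - r) • a + r • t := by gcongr

section SublevelVolume

open Module (finrank)

variable {E : Type*} [NormedAddCommGroup E] [NormedSpace ℝ E] [FiniteDimensional ℝ E]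
  [MeasurableSpace E] [BorelSpace E] {μ : Measure E} [μ.IsAddHaarMeasure] {s : Set E} {f : E → ℝ}

theorem pow_mul_measureReal_sublevel_le_of_apply_le (hf : ConvexOn ℝ s f) (hμs : μ s ≠ ⊤)
    {x₀ : E} (hx₀ : x₀ ∈ s) {a u t : ℝ} (hfx₀ : f x₀ ≤ a) (hau : a < u) (hut : u ≤ t) :
    (u - a) ^ finrank ℝ E * μ.real {x ∈ s | f x ≤ t} ≤
      (t - a) ^ finrank ℝ E * μ.real {x ∈ s | f x ≤ u} := by
  have : 0 < u - a := sub_pos.mpr hau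
  have hta : 0 < t - a := by linarith
  set r := (u - a) / (t - a) with hr
  have hr₀ : 0 ≤ r := by positivity
  have hr₁ : r ≤ 1 := (div_le_one hta).mpr (by linarith)
  have hlevel : (1 - r) • a + r • t = u := by
    simp only [smul_eq_mul, hr]
    field_simp
    ring
  have hsub : AffineMap.homothety x₀ r '' {x ∈ s | f x ≤ t} ⊆ {x ∈ s | f x ≤ u} := by
    simpa only [hlevel] using (mapsTo_homothety_sublevel hf hx₀ hfx₀ hr₀ hr₁ t).image_subset
  have hvol : r ^ finrank ℝ E * μ.real {x ∈ s | f x ≤ t} ≤ μ.real {x ∈ s | f x ≤ u} := by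
    have h := measureReal_mono hsub (measure_ne_top_of_subset (sep_subset _ _) hμs)
    rwa [measureReal_def, Measure.addHaar_image_homothety, ENNReal.toReal_mul,
      ENNReal.toReal_ofReal (abs_nonneg _), abs_of_nonneg (by positivity)] at h
  rwa [hr, div_pow, div_mul_eq_mul_div, div_le_iff₀' (by positivity)] at hvol

theorem pow_mul_measureReal_sublevel_le (hf : ConvexOn ℝ s f) (hμs : μ s ≠ ⊤) (hs : s.Nonempty)
    {u t : ℝ} (hu : sInf (f '' s) < u) (hut : u ≤ t) :
    (u - sInf (f '' s)) ^ finrank ℝ E * μ.real {x ∈ s | f x ≤ t} ≤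
      (t - sInf (f '' s)) ^ finrank ℝ E * μ.real {x ∈ s | f x ≤ u} := by
  have habove : ∀ a ∈ Ioo (sInf (f '' s)) u,
      (u - a) ^ finrank ℝ E * μ.real {x ∈ s | f x ≤ t} ≤
        (t - a) ^ finrank ℝ E * μ.real {x ∈ s | f x ≤ u} := by
    rintro a ⟨ha, hau⟩
    obtain ⟨_, ⟨x₀, hx₀, rfl⟩, hfx₀⟩ := exists_lt_of_csInf_lt (hs.image f) ha
    exact pow_mul_measureReal_sublevel_le_of_apply_le hf hμs hx₀ hfx₀.le hau hut
  refine le_on_closure habove (by fun_prop) (by fun_prop) ?_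
  rw [closure_Ioo hu.ne]
  exact left_mem_Icc.mpr hu.le

theorem measureReal_sublevel_le_div_pow_mul (hf : ConvexOn ℝ s f) (hμs : μ s ≠ ⊤)
    (hs : s.Nonempty) {m t : ℝ} (hm : 0 < m) (hinf : sInf (f '' s) = -m) (ht : 0 ≤ t) :
    μ.real {x ∈ s | f x ≤ t} ≤ ((t + m) / m) ^ finrank ℝ E * μ.real {x ∈ s | f x ≤ 0} := by
  have h := pow_mul_measureReal_sublevel_le hf hμs hs (u := 0) (by linarith) ht
  rw [hinf, sub_neg_eq_add, sub_neg_eq_add, zero_add] at h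
  rwa [div_pow, div_mul_eq_mul_div, le_div_iff₀' (by positivity)]

end SublevelVolume

section Distribution

variable {α β : Type*} [MeasurableSpace α] {μ : Measure α} {s : Set α}

theorem monotone_measureReal_sublevel [Preorder β] (hμs : μ s ≠ ⊤) (f : α → β) :
    Monotone fun t => μ.real {x ∈ s | f x ≤ t} := fun _ _ ht =>
  measureReal_mono (fun _ hx => ⟨hx.1, hx.2.trans ht⟩)
    (measure_ne_top_of_subset (sep_subset _ _) hμs)

theorem antitone_measureReal_superlevel [Preorder β] [IsFiniteMeasure μ] (f : α → β) :
    Antitone fun t => μ.real {x | t ≤ f x} := fun _ _ ht =>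
  measureReal_mono fun _ hx => ht.trans hx

theorem measureReal_sub_sublevel_le_restrict_superlevel [LinearOrder β] (hμs : μ s ≠ ⊤)
    (f : α → β) (t : β) :
    μ.real s - μ.real {x ∈ s | f x ≤ t} ≤ (μ.restrict s).real {x | t ≤ f x} := by
  have : IsFiniteMeasure (μ.restrict s) := isFiniteMeasure_restrict.mpr hμs
  have hsub : s \ {x ∈ s | f x ≤ t} ⊆ {x | t ≤ f x} ∩ s := fun x hx =>
    ⟨(lt_of_not_ge fun h => hx.2 ⟨hx.1, h⟩).le, hx.1⟩
  calc μ.real s - μ.real {x ∈ s | f x ≤ t}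
      ≤ μ.real (s \ {x ∈ s | f x ≤ t}) :=
        le_measureReal_sdiff (measure_ne_top_of_subset (sep_subset _ _) hμs)
    _ ≤ μ.real ({x | t ≤ f x} ∩ s) :=
        measureReal_mono hsub (measure_ne_top_of_subset inter_subset_right hμs)
    _ ≤ (μ.restrict s).real {x | t ≤ f x} :=
        ENNReal.toReal_mono (measure_ne_top _ _) (Measure.le_restrict_apply _ _)

end Distribution

section LayerCake

variable {α : Type*} [MeasurableSpace α] {μ : Measure α} {f : α → ℝ}

theorem integral_min_max_zero_le_setIntegral_pos (hf : Integrable f μ) {b : ℝ} (hb : 0 ≤ b) :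
    ∫ x, min (max (f x) 0) b ∂μ ≤ ∫ x in {x | 0 < f x}, f x ∂μ := by
  have hpos : NullMeasurableSet {x | 0 < f x} μ :=
    nullMeasurableSet_lt aemeasurable_const hf.aemeasurable
  rw [← integral_indicator₀ hpos]
  refine integral_mono_of_nonneg (.of_forall fun x => le_min (le_max_right _ _) hb)
    (hf.indicator₀ hpos) (.of_forall fun x => (min_le_left _ _).trans ?_)
  by_cases hx : 0 < f x
  · simp [indicator, hx, hx.le]
  · simp [indicator, hx, not_lt.mp hx]

theorem integral_measureReal_superlevel_le_setIntegral_pos (hf : Integrable f μ) {b : ℝ}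
    (hb : 0 ≤ b) :
    ∫ t in 0..b, μ.real {x | t ≤ f x} ≤ ∫ x in {x | 0 < f x}, f x ∂μ := by
  have htrunc_nonneg : ∀ x, 0 ≤ min (max (f x) 0) b := fun x => le_min (le_max_right _ _) hb
  have htrunc : Integrable (fun x => min (max (f x) 0) b) μ :=
    hf.pos_part.mono' (by fun_prop) (.of_forall fun x => by
      rw [Real.norm_of_nonneg (htrunc_nonneg x)]
      exact min_le_left _ _)
  calc ∫ t in 0..b, μ.real {x | t ≤ f x}
      = ∫ t in Ioc 0 b, μ.real {x | t ≤ min (max (f x) 0) b} := by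
        rw [intervalIntegral.integral_of_le hb]
        refine setIntegral_congr_fun measurableSet_Ioc fun t ⟨ht₀, htb⟩ => ?_
        simp only [le_min_iff, le_max_iff, htb, ht₀.not_ge, or_false, and_true]
    _ = ∫ x, min (max (f x) 0) b ∂μ :=
        (htrunc.integral_eq_integral_Ioc_meas_le (.of_forall htrunc_nonneg)
          (.of_forall fun _ => min_le_right _ _)).symm
    _ ≤ ∫ x in {x | 0 < f x}, f x ∂μ := integral_min_max_zero_le_setIntegral_pos hf hb

theorem integral_measureReal_sub_sublevel_le_setIntegral_pos {s : Set α} (hf : IntegrableOn f s μ)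
    (hμs : μ s ≠ ⊤) {b : ℝ} (hb : 0 ≤ b) :
    ∫ t in 0..b, (μ.real s - μ.real {x ∈ s | f x ≤ t}) ≤ ∫ x in {x ∈ s | 0 < f x}, f x ∂μ := by
  have : IsFiniteMeasure (μ.restrict s) := isFiniteMeasure_restrict.mpr hμs
  calc ∫ t in 0..b, (μ.real s - μ.real {x ∈ s | f x ≤ t})
      ≤ ∫ t in 0..b, (μ.restrict s).real {x | t ≤ f x} :=
        intervalIntegral.integral_mono hb
          (intervalIntegrable_const.sub (monotone_measureReal_sublevel hμs f).intervalIntegrable)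
          (antitone_measureReal_superlevel f).intervalIntegrable
          (measureReal_sub_sublevel_le_restrict_superlevel hμs f)
    _ ≤ ∫ x in {x | 0 < f x}, f x ∂μ.restrict s :=
        integral_measureReal_superlevel_le_setIntegral_pos hf hb
    _ = ∫ x in {x ∈ s | 0 < f x}, f x ∂μ := by
        rw [Measure.restrict_restrict₀ (nullMeasurableSet_lt aemeasurable_const hf.aemeasurable),
          inter_comm]
        rfl

end LayerCake

theorem integral_add_div_pow (n : ℕ) (m b : ℝ) :
    ∫ t in 0..b, ((t + m) / m) ^ n = ((b + m) ^ (n + 1) - m ^ (n + 1)) / ((n + 1) * m ^ n) := by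
  simp only [div_pow, intervalIntegral.integral_div]
  rw [intervalIntegral.integral_comp_add_right (fun t : ℝ => t ^ n), integral_pow, zero_add,
    div_div]

theorem stmt_5_general {E : Type*} [NormedAddCommGroup E] [NormedSpace ℝ E]
    [FiniteDimensional ℝ E] [MeasurableSpace E] [BorelSpace E] {μ : Measure E}
    [μ.IsAddHaarMeasure] {P : Set E} (hne : P.Nonempty) (hμP : μ P ≠ ⊤) {φ : E → ℝ}
    (hφ : ConvexOn ℝ P φ) (hint : IntegrableOn φ P μ) {m : ℝ} (hm : 0 < m)
    (hinf : sInf (φ '' P) = -m) {b : ℝ} (hb : 0 ≤ b) :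
    b * μ.real P -
        ((b + m) ^ (Module.finrank ℝ E + 1) - m ^ (Module.finrank ℝ E + 1)) /
          ((Module.finrank ℝ E + 1) * m ^ Module.finrank ℝ E) * μ.real {x ∈ P | φ x ≤ 0} ≤
      ∫ x in {x ∈ P | 0 < φ x}, φ x ∂μ := by
  set d := Module.finrank ℝ E
  have hpow : IntervalIntegrable (fun t => ((t + m) / m) ^ d * μ.real {x ∈ P | φ x ≤ 0})
      volume 0 b := Continuous.intervalIntegrable (by fun_prop) _ _
  calc b * μ.real P - ((b + m) ^ (d + 1) - m ^ (d + 1)) / ((d + 1) * m ^ d) *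
          μ.real {x ∈ P | φ x ≤ 0}
      = ∫ t in 0..b, (μ.real P - ((t + m) / m) ^ d * μ.real {x ∈ P | φ x ≤ 0}) := by
        rw [intervalIntegral.integral_sub intervalIntegrable_const hpow,
          intervalIntegral.integral_mul_const, integral_add_div_pow,
          intervalIntegral.integral_const, sub_zero, smul_eq_mul]
    _ ≤ ∫ t in 0..b, (μ.real P - μ.real {x ∈ P | φ x ≤ t}) :=
        intervalIntegral.integral_mono_on hb (intervalIntegrable_const.sub hpow)
          (intervalIntegrable_const.sub (monotone_measureReal_sublevel hμP φ).intervalIntegrable)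
          fun t ht => sub_le_sub_left
            (measureReal_sublevel_le_div_pow_mul hφ hμP hne hm hinf ht.1) _
    _ ≤ ∫ x in {x ∈ P | 0 < φ x}, φ x ∂μ :=
        integral_measureReal_sub_sublevel_le_setIntegral_pos hint hμP hb

/-- For a centered convex function with `inf_P φ = -1` and any `b > 0`:
`∫_{P_+} φ ≥ b μ(P) - (((b+1)^{n+1} - 1)/(n+1)) μ(P_-)`. -/
theorem stmt_5 (n : ℕ) (hn : 1 ≤ n) (P : Set (Fin n → ℝ))
    (hne : P.Nonempty) (hbd : Bornology.IsBounded P) (hop : IsOpen P) (hcv : Convex ℝ P)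
    (φ : (Fin n → ℝ) → ℝ) (hφ : ConvexOn ℝ P φ)
    (hint : IntegrableOn φ P volume)
    (hzero : (∫ x in P, φ x) = 0)
    (hinf : sInf (φ '' P) = -1) :
    ∀ b : ℝ, 0 < b →
      (∫ x in {x ∈ P | 0 < φ x}, φ x) ≥
        b * (volume P).toReal -
          (((b + 1) ^ (n + 1) - 1) / (n + 1 : ℝ)) * (volume {x ∈ P | φ x ≤ 0}).toReal := by
  intro b hb
  simpa [measureReal_def] using
    stmt_5_general hne hbd.measure_lt_top.ne hφ hint one_pos hinf hb.le
end

section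
/- Let n ≥ 1 and let P := {x ∈ ℝ^n : x_i > 0 for all i, and x_1 + … + x_n < (n+1)/n}, the interior of the simplex with vertices 0 and ((n+1)/n)e_i for 1 ≤ i ≤ n. Define φ : P → ℝ by φ(x) = −1 + x_1 + … + x_n. Then φ is convex, inf_P φ = −1, ∫_P φ dμ = 0, and (1/μ(P)) ∫_P |φ| dμ = (2/(n+1))·(n/(n+1))^n. In particular, the lower bound in the inequality (2/(n+1))·(n/(n+1))^n·(−inf_P φ) ≤ (1/μ(P))∫_P |φ| dμ is attained. -/
open MeasureTheory Set

/-!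
The height `x ↦ c - ∑ xᵢ` on the simplex `S c` with vertices `0` and `c eᵢ` has superlevel sets
`S (c - t)`, whose volume is proportional to `(c - t) ^ n`. By the layer-cake formula its mean is
therefore `c / (n + 1)`, so the mean of `∑ xᵢ` on `S c` is `n c / (n + 1)`, which is `1` for
`c = (n + 1) / n`. Since `φ < 0` exactly on `S 1`, where `-φ` is the height of `S 1`,
`∫_P |φ| = ∫_P φ + 2 ∫_{S 1} (-φ) = 2 / (n + 1) * μ (S 1)`, and `μ P = ((n + 1) / n) ^ n * μ (S 1)`.
-/

section OpenSimplex

variable {ι : Type*} [Fintype ι] {c d : ℝ}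

/-- The interior of the simplex in `ℝ^ι` with vertices `0` and `c eᵢ`. It is empty if `c ≤ 0`, and
a single point if `ι` is empty and `0 < c`. -/
def openSimplex (ι : Type*) [Fintype ι] (c : ℝ) : Set (ι → ℝ) :=
  {x | (∀ i, 0 < x i) ∧ ∑ i, x i < c}

lemma openSimplex_eq_pi_inter (ι : Type*) [Fintype ι] (c : ℝ) :
    openSimplex ι c = univ.pi (fun _ ↦ Ioi 0) ∩ {x | ∑ i, x i < c} := by
  ext x
  simp [openSimplex]

lemma isOpen_openSimplex : IsOpen (openSimplex ι c) := by
  rw [openSimplex_eq_pi_inter]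
  exact (isOpen_set_pi finite_univ fun _ _ ↦ isOpen_Ioi).inter
    (isOpen_lt (by fun_prop) continuous_const)

lemma convexOn_sum_sub {s : Set (ι → ℝ)} (hs : Convex ℝ s) (d : ℝ) :
    ConvexOn ℝ s fun x ↦ ∑ i, x i - d := by
  refine ⟨hs, fun x _ y _ a b _ _ hab ↦ le_of_eq ?_⟩
  simp only [Pi.add_apply, Pi.smul_apply, smul_eq_mul, Finset.sum_add_distrib, ← Finset.mul_sum]
  linear_combination d * hab

lemma convex_openSimplex : Convex ℝ (openSimplex ι c) := by
  rw [openSimplex_eq_pi_inter]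
  refine (convex_pi fun _ _ ↦ convex_Ioi 0).inter ?_
  simpa using (convexOn_sum_sub (ι := ι) convex_univ 0).convex_lt c

lemma openSimplex_subset_openSimplex (hcd : c ≤ d) : openSimplex ι c ⊆ openSimplex ι d :=
  fun _ hx ↦ ⟨hx.1, hx.2.trans_le hcd⟩

lemma openSimplex_eq_empty (hc : c ≤ 0) : openSimplex ι c = ∅ :=
  eq_empty_of_forall_notMem fun _ hx ↦
    (hx.2.trans_le hc).not_ge (Finset.sum_nonneg fun i _ ↦ (hx.1 i).le)

lemma openSimplex_nonempty (hc : 0 < c) : (openSimplex ι c).Nonempty := by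
  refine ⟨fun _ ↦ c / (Fintype.card ι + 1), fun _ ↦ by positivity, ?_⟩
  rw [Finset.sum_const, Finset.card_univ, nsmul_eq_mul, mul_div_assoc', div_lt_iff₀ (by positivity)]
  linarith

lemma isGLB_image_sum_sub_openSimplex (hc : 0 < c) (d : ℝ) :
    IsGLB ((fun x ↦ ∑ i, x i - d) '' openSimplex ι c) (-d) := by
  refine ⟨?_, fun b hb ↦ le_of_forall_pos_le_add fun ε hε ↦ ?_⟩
  · rintro _ ⟨x, hx, rfl⟩
    linarith [Finset.sum_nonneg fun i (_ : i ∈ Finset.univ) ↦ (hx.1 i).le]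
  · obtain ⟨x, hx⟩ := openSimplex_nonempty (ι := ι) (lt_min hc hε)
    have hxc : x ∈ openSimplex ι c := openSimplex_subset_openSimplex (min_le_left c ε) hx
    have hxε : ∑ i, x i < ε := hx.2.trans_le (min_le_right c ε)
    linarith [hb (mem_image_of_mem _ hxc)]

lemma openSimplex_subset_Icc : openSimplex ι c ⊆ Icc (fun _ ↦ 0) (fun _ ↦ c) := fun _ hx ↦
  ⟨fun i ↦ (hx.1 i).le, fun i ↦
    (Finset.single_le_sum (fun j _ ↦ (hx.1 j).le) (Finset.mem_univ i)).trans hx.2.le⟩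

lemma integrableOn_openSimplex {f : (ι → ℝ) → ℝ} (hf : Continuous f) :
    IntegrableOn f (openSimplex ι c) :=
  (hf.continuousOn.integrableOn_compact isCompact_Icc).mono_set openSimplex_subset_Icc

lemma volume_openSimplex_ne_top : volume (openSimplex ι c) ≠ ⊤ :=
  measure_ne_top_of_subset openSimplex_subset_Icc isCompact_Icc.measure_lt_top.ne

lemma volume_real_openSimplex_pos (hc : 0 < c) : 0 < volume.real (openSimplex ι c) :=
  ENNReal.toReal_pos (isOpen_openSimplex.measure_pos volume (openSimplex_nonempty hc)).ne'
    volume_openSimplex_ne_top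

open scoped Pointwise in
lemma smul_openSimplex (hc : 0 < c) (d : ℝ) : c • openSimplex ι d = openSimplex ι (c * d) := by
  ext x
  rw [mem_smul_set_iff_inv_smul_mem₀ hc.ne']
  simp only [openSimplex, mem_ofPred_eq, Pi.smul_apply, smul_eq_mul, ← Finset.mul_sum,
    mul_pos_iff_of_pos_left (inv_pos.2 hc), inv_mul_lt_iff₀ hc]

open scoped Pointwise in
lemma volume_real_openSimplex (hc : 0 < c) :
    volume.real (openSimplex ι c) = c ^ Fintype.card ι * volume.real (openSimplex ι 1) := by
  calc volume.real (openSimplex ι c)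
      = volume.real (c • openSimplex ι 1) := by rw [smul_openSimplex hc, mul_one]
    _ = c ^ Fintype.card ι * volume.real (openSimplex ι 1) := by
        rw [measureReal_def, Measure.addHaar_smul_of_nonneg _ hc.le,
          Module.finrank_fintype_fun_eq_card, ENNReal.toReal_mul,
          ENNReal.toReal_ofReal (pow_nonneg hc.le _), measureReal_def]

lemma superlevel_inter_openSimplex {t : ℝ} (ht : 0 ≤ t) :
    {x | t < c - ∑ i, x i} ∩ openSimplex ι c = openSimplex ι (c - t) := by
  ext x
  simp only [openSimplex, mem_inter_iff, mem_ofPred_eq]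
  constructor
  · rintro ⟨hxt, hx, -⟩
    exact ⟨hx, by linarith⟩
  · rintro ⟨hx, hxt⟩
    exact ⟨by linarith, hx, by linarith⟩

lemma integral_sub_sum_openSimplex_eq_integral_volume (c : ℝ) :
    ∫ x in openSimplex ι c, (c - ∑ i, x i) =
      ∫ t in Ioo 0 c, volume.real (openSimplex ι (c - t)) := by
  have hS : MeasurableSet (openSimplex ι c) := isOpen_openSimplex.measurableSet
  have hf_int : IntegrableOn (fun x : ι → ℝ ↦ c - ∑ i, x i) (openSimplex ι c) :=
    integrableOn_openSimplex (by fun_prop)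
  have hnonneg : 0 ≤ᵐ[volume.restrict (openSimplex ι c)] fun x ↦ c - ∑ i, x i :=
    (ae_restrict_iff' hS).2 (.of_forall fun x hx ↦ sub_nonneg.2 hx.2.le)
  have hlevel : ∀ t ∈ Ioi (0 : ℝ), (volume.restrict (openSimplex ι c)).real {x | t < c - ∑ i, x i} =
      volume.real (openSimplex ι (c - t)) := fun t ht ↦ by
    rw [measureReal_restrict_apply' hS, superlevel_inter_openSimplex (le_of_lt ht)]
  rw [hf_int.integral_eq_integral_meas_lt hnonneg, setIntegral_congr_fun measurableSet_Ioi hlevel]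
  refine setIntegral_eq_of_subset_of_forall_sdiff_eq_zero measurableSet_Ioi Ioo_subset_Ioi_self
    fun t ht ↦ ?_
  have hct : c ≤ t := not_lt.1 fun htc ↦ ht.2 ⟨ht.1, htc⟩
  rw [openSimplex_eq_empty (sub_nonpos.2 hct), measureReal_empty]

lemma integral_sub_sum_openSimplex (c : ℝ) :
    ∫ x in openSimplex ι c, (c - ∑ i, x i) =
      c / (Fintype.card ι + 1) * volume.real (openSimplex ι c) := by
  obtain hc | hc := le_or_gt c 0
  · simp [openSimplex_eq_empty hc]
  have hvol : ∀ t ∈ Ioo 0 c, volume.real (openSimplex ι (c - t)) =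
      (c - t) ^ Fintype.card ι * volume.real (openSimplex ι 1) :=
    fun t ht ↦ volume_real_openSimplex (sub_pos.2 ht.2)
  calc ∫ x in openSimplex ι c, (c - ∑ i, x i)
      = ∫ t in Ioo 0 c, (c - t) ^ Fintype.card ι * volume.real (openSimplex ι 1) := by
        rw [integral_sub_sum_openSimplex_eq_integral_volume,
          setIntegral_congr_fun measurableSet_Ioo hvol]
    _ = (∫ t in (0)..c, (c - t) ^ Fintype.card ι) * volume.real (openSimplex ι 1) := by
        rw [← integral_Ioc_eq_integral_Ioo, ← intervalIntegral.integral_of_le hc.le,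
          intervalIntegral.integral_mul_const]
    _ = c ^ (Fintype.card ι + 1) / (Fintype.card ι + 1) * volume.real (openSimplex ι 1) := by
        rw [intervalIntegral.integral_comp_sub_left (fun t ↦ t ^ Fintype.card ι), integral_pow]
        simp
    _ = c / (Fintype.card ι + 1) * volume.real (openSimplex ι c) := by
        rw [volume_real_openSimplex hc]
        ring

lemma integral_sum_sub_openSimplex (c d : ℝ) :
    ∫ x in openSimplex ι c, (∑ i, x i - d) =
      (Fintype.card ι * c / (Fintype.card ι + 1) - d) * volume.real (openSimplex ι c) := by
  calc ∫ x in openSimplex ι c, (∑ i, x i - d)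
      = ∫ x in openSimplex ι c, ((c - d) - (c - ∑ i, x i)) := by simp only [sub_sub_sub_cancel_left]
    _ = (c - d) * volume.real (openSimplex ι c) -
          c / (Fintype.card ι + 1) * volume.real (openSimplex ι c) := by
        rw [integral_sub (integrableOn_openSimplex continuous_const)
          (integrableOn_openSimplex (by fun_prop)), integral_sub_sum_openSimplex,
          setIntegral_const, smul_eq_mul, mul_comm]
    _ = (Fintype.card ι * c / (Fintype.card ι + 1) - d) * volume.real (openSimplex ι c) := by
        field_simp
        ring

lemma integral_abs_sum_sub_openSimplex (hdc : d ≤ c) :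
    ∫ x in openSimplex ι c, |∑ i, x i - d| =
      (∫ x in openSimplex ι c, (∑ i, x i - d)) + 2 * ∫ x in openSimplex ι d, (d - ∑ i, x i) := by
  have hSd : MeasurableSet (openSimplex ι d) := isOpen_openSimplex.measurableSet
  have habs : ∀ x ∈ openSimplex ι c, |∑ i, x i - d| =
      (∑ i, x i - d) + 2 * (openSimplex ι d).indicator (fun x ↦ d - ∑ i, x i) x := by
    intro x hx
    by_cases hxd : ∑ i, x i < d
    · rw [indicator_of_mem (show x ∈ openSimplex ι d from ⟨hx.1, hxd⟩), abs_of_neg (by linarith)]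
      ring
    · rw [indicator_of_notMem (fun h ↦ hxd h.2), abs_of_nonneg (by linarith)]
      ring
  have hf_int : IntegrableOn ((openSimplex ι d).indicator fun x ↦ d - ∑ i, x i) (openSimplex ι c) :=
    (IntegrableOn.integrable_indicator
      (integrableOn_openSimplex (by fun_prop)) hSd).integrableOn
  rw [setIntegral_congr_fun isOpen_openSimplex.measurableSet habs,
    integral_add (integrableOn_openSimplex (by fun_prop)) (hf_int.const_mul 2),
    integral_const_mul, setIntegral_indicator hSd,
    inter_eq_right.2 (openSimplex_subset_openSimplex hdc)]

end OpenSimplex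

/-- The extremal example: on the open simplex `P` with vertices `0` and `((n+1)/n) eᵢ`,
the function `φ(x) = -1 + x₁ + ⋯ + xₙ` is convex, has infimum `-1`, integrates to zero,
and attains the lower bound `(2/(n+1)) (n/(n+1))^n` in the sharp inequality. -/
theorem stmt_6 (n : ℕ) (hn : 1 ≤ n)
    (P : Set (Fin n → ℝ))
    (hP : P = {x | (∀ i, 0 < x i) ∧ ∑ i, x i < (n + 1 : ℝ) / n})
    (φ : (Fin n → ℝ) → ℝ)
    (hφdef : φ = fun x => -1 + ∑ i, x i) :
    ConvexOn ℝ P φ ∧ sInf (φ '' P) = -1 ∧ (∫ x in P, φ x) = 0 ∧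
      (1 / (volume P).toReal) * (∫ x in P, |φ x|) =
        (2 / (n + 1 : ℝ)) * ((n : ℝ) / (n + 1)) ^ n := by
  have hn₀ : (0 : ℝ) < n := by exact_mod_cast hn
  obtain ⟨c, hc⟩ : ∃ c : ℝ, c = (n + 1) / n := ⟨_, rfl⟩
  have hc₁ : 1 ≤ c := by rw [hc, le_div_iff₀ hn₀]; linarith
  have hc₀ : 0 < c := by linarith
  obtain rfl : P = openSimplex (Fin n) c := by rw [hP, hc, openSimplex]
  obtain rfl : φ = fun x ↦ ∑ i, x i - 1 := by simp only [hφdef, neg_add_eq_sub]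
  have hφint : ∫ x in openSimplex (Fin n) c, (∑ i, x i - 1) = 0 := by
    rw [integral_sum_sub_openSimplex, Fintype.card_fin, hc]
    field_simp
    simp
  have habs : ∫ x in openSimplex (Fin n) c, |∑ i, x i - 1| =
      2 / (n + 1) * volume.real (openSimplex (Fin n) 1) := by
    rw [integral_abs_sum_sub_openSimplex hc₁, hφint, integral_sub_sum_openSimplex, Fintype.card_fin]
    ring
  have hglb := isGLB_image_sum_sub_openSimplex (ι := Fin n) hc₀ 1
  have hvol : 0 < volume.real (openSimplex (Fin n) 1) := volume_real_openSimplex_pos one_pos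
  refine ⟨convexOn_sum_sub convex_openSimplex 1,
    hglb.csInf_eq ((openSimplex_nonempty hc₀).image _), hφint, ?_⟩
  rw [habs, ← measureReal_def, volume_real_openSimplex hc₀, Fintype.card_fin, hc, div_pow, div_pow]
  field_simp
end

section
/- Let n ≥ 1 and m ≥ 1 be integers, and define φ_{n,m} : (0,1)^n → ℝ by φ_{n,m}(x_1, …, x_n) = φ_m(x_1), where φ_m(x) = max(2m − 1 − 2m²x, −1). Then φ_{n,m} is convex on (0,1)^n, inf_{(0,1)^n} φ_{n,m} = −1, ∫_{(0,1)^n} φ_{n,m} dμ = 0, and ∫_{(0,1)^n} |φ_{n,m}| dμ ≥ 2 − 2/m. -/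
/-!
Write `u⁺ = max u 0`. Since `φ_m(t) = 2m² (1/m - t)⁺ - 1` and `|φ| = 2 φ⁺ - φ`, where
`φ_m⁺(t) = 2m² ((2m - 1)/(2m²) - t)⁺`, both integrals reduce to `∫₀¹ (a - t)⁺ dt = a²/2`:
this gives `∫ φ_m = 0` and `∫ |φ_m| = 2 (1 - 1/(2m))² ≥ 2 - 2/m`.
The infimum is the value at the boundary point `1`, which need not be attained inside (`m = 1`).
-/

open MeasureTheory Set

theorem setIntegral_univ_pi_comp_eval {ι E : Type*} [Fintype ι] {X : ι → Type*}
    [∀ j, MeasurableSpace (X j)] {μ : ∀ j, Measure (X j)} [∀ j, SigmaFinite (μ j)]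
    [NormedAddCommGroup E] [NormedSpace ℝ E] {s : ∀ j, Set (X j)} (hs : ∀ j, μ j (s j) = 1)
    {i : ι} {f : X i → E} (hf : AEStronglyMeasurable f ((μ i).restrict (s i))) :
    ∫ x in univ.pi s, f (x i) ∂Measure.pi μ = ∫ t in s i, f t ∂μ i := by
  have (j : ι) : IsProbabilityMeasure ((μ j).restrict (s j)) := ⟨by simp [hs]⟩
  rw [Measure.restrict_pi_pi, integral_comp_eval hf]

theorem setIntegral_unitCube_comp_eval {ι E : Type*} [Fintype ι] [NormedAddCommGroup E]
    [NormedSpace ℝ E] (i : ι) {f : ℝ → E} (hf : Continuous f) :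
    ∫ x in univ.pi fun _ : ι => Ioo (0 : ℝ) 1, f (x i) = ∫ t in (0 : ℝ)..1, f t := by
  rw [volume_pi, setIntegral_univ_pi_comp_eval (by simp) hf.aestronglyMeasurable,
    intervalIntegral.integral_of_le zero_le_one, integral_Ioc_eq_integral_Ioo]

theorem integral_max_sub_zero {a b c : ℝ} (hab : a ≤ b) (hbc : b ≤ c) :
    ∫ t in a..c, max (b - t) 0 = (b - a) ^ 2 / 2 := by
  have hcont : Continuous fun t => max (b - t) 0 := by fun_prop
  have hleft : ∫ t in a..b, max (b - t) 0 = (b - a) ^ 2 / 2 := calc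
    ∫ t in a..b, max (b - t) 0 = ∫ t in a..b, (b - t) :=
      intervalIntegral.integral_congr fun t ht =>
        max_eq_left (sub_nonneg.2 (uIcc_of_le hab ▸ ht).2)
    _ = (b - a) ^ 2 / 2 := by simp [intervalIntegral.integral_comp_sub_left fun t => t]
  have hright : ∫ t in b..c, max (b - t) 0 = 0 :=
    (intervalIntegral.integral_congr fun t ht =>
      max_eq_right (sub_nonpos.2 (uIcc_of_le hbc ▸ ht).1)).trans intervalIntegral.integral_zero
  rw [← intervalIntegral.integral_add_adjacent_intervals (hcont.intervalIntegrable a b)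
    (hcont.intervalIntegrable b c), hleft, hright, add_zero]

theorem abs_eq_two_mul_max_zero_sub (x : ℝ) : |x| = 2 * max x 0 - x :=
  eq_sub_of_add_eq ((abs_add_eq_two_nsmul_posPart x).trans (nsmul_eq_mul 2 _))

/-- The one-variable profile `φ_m`, for a real parameter `m` and on the whole real line. -/
def phi (m t : ℝ) : ℝ :=
  max (2 * m - 1 - 2 * m ^ 2 * t) (-1)

section Phi

variable {m : ℝ}

theorem continuous_phi : Continuous (phi m) := by
  unfold phi
  fun_prop

theorem neg_one_le_phi (t : ℝ) : -1 ≤ phi m t :=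
  le_max_right _ _

theorem phi_one (hm : 1 ≤ m) : phi m 1 = -1 :=
  max_eq_right (by nlinarith)

theorem phi_eq_mul_max_sub_one (hm : m ≠ 0) (t : ℝ) :
    phi m t = 2 * m ^ 2 * max (1 / m - t) 0 - 1 := by
  rw [phi, mul_max_of_nonneg _ _ (by positivity), ← max_sub_sub_right]
  congr 1
  · field_simp
    ring
  · ring

theorem max_phi_zero (hm : m ≠ 0) (t : ℝ) :
    max (phi m t) 0 = 2 * m ^ 2 * max ((2 * m - 1) / (2 * m ^ 2) - t) 0 := by
  rw [phi, max_assoc, max_eq_right (by norm_num : (-1 : ℝ) ≤ 0),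
    mul_max_of_nonneg _ _ (by positivity), mul_zero]
  congr 1
  field_simp

theorem convexOn_phi : ConvexOn ℝ univ (phi m) := by
  have haffine : ConvexOn ℝ univ fun t : ℝ => 2 * m - 1 - 2 * m ^ 2 * t :=
    ⟨convex_univ, fun x _ y _ a b _ _ hab => by
      simp only [smul_eq_mul]
      linear_combination (1 - 2 * m) * hab⟩
  exact haffine.sup (convexOn_const (-1) convex_univ)

theorem isGLB_image_phi (hm : 1 ≤ m) {s : Set ℝ} (hs : 1 ∈ closure s) :
    IsGLB (phi m '' s) (-1) := by
  refine isGLB_of_mem_closure (forall_mem_image.2 fun t _ => neg_one_le_phi t) ?_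
  rw [← phi_one hm]
  exact image_closure_subset_closure_image continuous_phi (mem_image_of_mem _ hs)

theorem integral_phi (hm : 1 ≤ m) : ∫ t in (0 : ℝ)..1, phi m t = 0 := by
  have hm₀ : m ≠ 0 := by positivity
  have hcont : Continuous fun t => 2 * m ^ 2 * max (1 / m - t) 0 := by fun_prop
  simp only [phi_eq_mul_max_sub_one hm₀]
  rw [intervalIntegral.integral_sub (hcont.intervalIntegrable 0 1) intervalIntegrable_const,
    intervalIntegral.integral_const_mul,
    integral_max_sub_zero (by positivity) ((div_le_one (by positivity)).2 hm),
    intervalIntegral.integral_const, smul_eq_mul]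
  field_simp
  ring

theorem integral_max_phi_zero (hm : 1 ≤ m) :
    ∫ t in (0 : ℝ)..1, max (phi m t) 0 = (1 - 1 / (2 * m)) ^ 2 := by
  have hm₀ : m ≠ 0 := by positivity
  have hroot_nonneg : 0 ≤ (2 * m - 1) / (2 * m ^ 2) := div_nonneg (by linarith) (by positivity)
  have hroot_le_one : (2 * m - 1) / (2 * m ^ 2) ≤ 1 :=
    (div_le_one (by positivity)).2 (by nlinarith)
  simp only [max_phi_zero hm₀]
  rw [intervalIntegral.integral_const_mul, integral_max_sub_zero hroot_nonneg hroot_le_one]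
  field_simp
  ring

theorem integral_abs_phi (hm : 1 ≤ m) :
    ∫ t in (0 : ℝ)..1, |phi m t| = 2 * (1 - 1 / (2 * m)) ^ 2 := by
  have hcont : Continuous fun t => 2 * max (phi m t) 0 :=
    continuous_const.mul (continuous_phi.max continuous_const)
  simp only [abs_eq_two_mul_max_zero_sub]
  rw [intervalIntegral.integral_sub (hcont.intervalIntegrable 0 1)
      (continuous_phi.intervalIntegrable 0 1), intervalIntegral.integral_const_mul,
    integral_max_phi_zero hm, integral_phi hm, sub_zero]

theorem le_integral_abs_phi (hm : 1 ≤ m) : 2 - 2 / m ≤ ∫ t in (0 : ℝ)..1, |phi m t| := calc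
  2 - 2 / m ≤ 2 - 2 / m + 2 * (1 / (2 * m)) ^ 2 := le_add_of_nonneg_right (by positivity)
  _ = 2 * (1 - 1 / (2 * m)) ^ 2 := by
    field_simp
    ring
  _ = ∫ t in (0 : ℝ)..1, |phi m t| := (integral_abs_phi hm).symm

end Phi

theorem stmt_9_general {ι : Type*} [Fintype ι] (i : ι) {m : ℝ} (hm : 1 ≤ m) :
    let C : Set (ι → ℝ) := univ.pi fun _ => Ioo 0 1
    ConvexOn ℝ C (fun x => phi m (x i)) ∧
    sInf ((fun x => phi m (x i)) '' C) = -1 ∧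
    (∫ x in C, phi m (x i)) = 0 ∧
    (∫ x in C, |phi m (x i)|) ≥ 2 - 2 / m := by
  intro C
  have hC : C.Nonempty := univ_pi_nonempty_iff.2 fun _ => nonempty_Ioo.2 zero_lt_one
  have himage : (fun x => phi m (x i)) '' C = phi m '' Ioo 0 1 := by
    rw [← eval_image_univ_pi hC, image_image]
  have hone : (1 : ℝ) ∈ closure (Ioo 0 1) := by simp [closure_Ioo]
  refine ⟨?_, ?_, ?_, ?_⟩
  · exact (convexOn_phi.comp_linearMap (LinearMap.proj i)).subset (subset_univ C)
      (convex_pi fun _ _ => convex_Ioo 0 1)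
  · rw [himage]
    exact (isGLB_image_phi hm hone).csInf_eq ((nonempty_Ioo.2 zero_lt_one).image _)
  · rw [setIntegral_unitCube_comp_eval i continuous_phi, integral_phi hm]
  · rw [setIntegral_unitCube_comp_eval i continuous_phi.abs]
    exact le_integral_abs_phi hm

/-- The `n`-dimensional family `φ_{n,m}(x) = φ_m(x₁)` on the open unit cube `(0,1)^n`:
convex, infimum `-1`, integral zero, and `∫ |φ_{n,m}| ≥ 2 - 2/m`. -/
theorem stmt_9 (n m : ℕ) (hn : 1 ≤ n) (hm : 1 ≤ m)
    (C : Set (Fin n → ℝ))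
    (hC : C = Set.univ.pi fun _ : Fin n => Set.Ioo (0 : ℝ) 1)
    (φ : (Fin n → ℝ) → ℝ)
    (hφdef : φ = fun x => max (2 * (m : ℝ) - 1 - 2 * (m : ℝ) ^ 2 * x ⟨0, hn⟩) (-1)) :
    ConvexOn ℝ C φ ∧
    sInf (φ '' C) = -1 ∧
    (∫ x in C, φ x) = 0 ∧
    (∫ x in C, |φ x|) ≥ 2 - 2 / (m : ℝ) := by
  subst hC hφdef
  exact stmt_9_general (⟨0, hn⟩ : Fin n) (Nat.one_le_cast.2 hm)
end

section
/- Let n ≥ 1 and let P := (0,1)^n ⊆ ℝ^n. Then the supremum, over all convex Lebesgue-integrable functions φ : P → ℝ with ∫_P φ dμ = 0 and inf_P φ < 0, of the ratio (∫_P |φ| dμ) / (−μ(P) · inf_P φ), equals 2 (and the supremum is not attained for this P, being approached by the family φ_{n,m} as m → ∞). -/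
open MeasureTheory Set

/-!
If `φ` has mean zero and `φ ≥ -m` with `m > 0`, then `|φ| ≤ φ + 2 m`, strictly where `φ ≥ 0`, which
is a set of positive measure; integrating, `∫ |φ| < 2 m μ(P)`. Conversely, if `φ_t ≥ -1` has mean
zero and `φ_t → -1` pointwise, then `|φ_t| - φ_t` is bounded by `2` and converges to `2`, so that
`∫ |φ_t| = ∫ (|φ_t| - φ_t) → 2 μ(P)`. On a bounded open convex `P` one may take
`φ_t = exp (t f) / ⨍ exp (t f) - 1` for a nonzero continuous linear functional `f`: as `f` has no
maximum on `P`, the average of `exp (t f)` outgrows `exp (t f x)` for every `x ∈ P`.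
-/

open Filter Topology

section MeanZero

variable {α : Type*} [MeasurableSpace α] {μ : Measure α} [IsFiniteMeasure μ]

theorem integral_abs_lt_of_neg_le [NeZero μ] {φ : α → ℝ} {m : ℝ} (hm : 0 < m)
    (hφ : Integrable φ μ) (hmean : ∫ x, φ x ∂μ = 0) (hle : ∀ᵐ x ∂μ, -m ≤ φ x) :
    ∫ x, |φ x| ∂μ < 2 * m * μ.real univ := by
  have hpos : 0 < μ {x | 0 ≤ φ x} := by
    simpa [average_eq, hmean] using measure_average_le_pos (NeZero.ne μ) hφ
  have hstrict (x : α) (hx : 0 ≤ φ x) : |φ x| < φ x + 2 * m := by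
    rw [abs_of_nonneg hx]
    linarith
  have hbound : ∀ᵐ x ∂μ, |φ x| ≤ φ x + 2 * m := by
    filter_upwards [hle] with x hx
    exact abs_le.2 ⟨by linarith, by linarith⟩
  have hint : Integrable (fun x ↦ φ x + 2 * m) μ := hφ.add (integrable_const _)
  calc ∫ x, |φ x| ∂μ < ∫ x, (φ x + 2 * m) ∂μ := by
        refine (integral_mono_ae hφ.abs hint hbound).lt_of_ne fun heq ↦ hpos.ne' ?_
        have hae := (integral_eq_iff_of_ae_le hφ.abs hint hbound).1 heq
        exact measure_mono_null (fun x hx ↦ (hstrict x hx).ne) hae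
    _ = 2 * m * μ.real univ := by
        rw [integral_add hφ (integrable_const _), hmean, integral_const, smul_eq_mul]
        ring

theorem tendsto_integral_abs_of_tendsto_neg {ι : Type*} {l : Filter ι} [l.IsCountablyGenerated]
    {φ : ι → α → ℝ} {m : ℝ} (hm : 0 ≤ m) (hφ : ∀ i, Integrable (φ i) μ)
    (hmean : ∀ i, ∫ x, φ i x ∂μ = 0) (hle : ∀ i, ∀ᵐ x ∂μ, -m ≤ φ i x)
    (hlim : ∀ᵐ x ∂μ, Tendsto (φ · x) l (𝓝 (-m))) :
    Tendsto (fun i ↦ ∫ x, |φ i x| ∂μ) l (𝓝 (2 * m * μ.real univ)) := by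
  have hdom : Tendsto (fun i ↦ ∫ x, (|φ i x| - φ i x) ∂μ) l (𝓝 (∫ _, 2 * m ∂μ)) := by
    refine tendsto_integral_filter_of_dominated_convergence (fun _ ↦ 2 * m)
      (.of_forall fun i ↦ ((hφ i).abs.sub (hφ i)).aestronglyMeasurable)
      (.of_forall fun i ↦ ?_) (integrable_const _) ?_
    · filter_upwards [hle i] with x hx
      rw [Real.norm_eq_abs, abs_of_nonneg (sub_nonneg.2 (le_abs_self _)), sub_le_iff_le_add]
      exact abs_le.2 ⟨by linarith, by linarith⟩
    · filter_upwards [hlim] with x hx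
      have h := hx.abs.sub hx
      rwa [abs_neg, abs_of_nonneg hm, sub_neg_eq_add, ← two_mul] at h
  rw [integral_const, smul_eq_mul, mul_comm] at hdom
  refine hdom.congr fun i ↦ ?_
  rw [integral_sub (hφ i).abs (hφ i), hmean i, sub_zero]

end MeanZero

section ExpDensity

variable {α : Type*} [MeasurableSpace α] {μ : Measure α} {f : α → ℝ}

/-- The function of `μ`-average one proportional to `exp ∘ f`. It is the density of
`Measure.tilted μ f` multiplied by the total mass of `μ`, and
zero if `exp ∘ f` is not integrable. -/
noncomputable def expDensity (μ : Measure α) (f : α → ℝ) (x : α) : ℝ :=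
  Real.exp (f x) / ⨍ y, Real.exp (f y) ∂μ

theorem average_exp_nonneg : 0 ≤ ⨍ y, Real.exp (f y) ∂μ :=
  integral_nonneg fun _ ↦ (Real.exp_pos _).le

theorem expDensity_nonneg (x : α) : 0 ≤ expDensity μ f x :=
  div_nonneg (Real.exp_pos _).le average_exp_nonneg

theorem integrable_expDensity (hf : Integrable (fun x ↦ Real.exp (f x)) μ) :
    Integrable (expDensity μ f) μ :=
  hf.div_const _

theorem integral_expDensity [IsFiniteMeasure μ] [NeZero μ]
    (hf : Integrable (fun x ↦ Real.exp (f x)) μ) :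
    ∫ x, expDensity μ f x ∂μ = μ.real univ := by
  have hV : μ.real univ ≠ 0 := measureReal_univ_ne_zero
  have hI := (integral_exp_pos hf).ne'
  simp only [expDensity, integral_div, average_eq, smul_eq_mul]
  field_simp

theorem expDensity_le [IsFiniteMeasure μ] (hf : Integrable (fun x ↦ Real.exp (f x)) μ) {c : ℝ}
    (hc : μ {y | c ≤ f y} ≠ 0) (x : α) :
    expDensity μ f x ≤ μ.real univ / μ.real {y | c ≤ f y} * Real.exp (f x - c) := by
  have hpos : 0 < μ.real {y | c ≤ f y} := ENNReal.toReal_pos hc (measure_ne_top _ _)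
  have markov : Real.exp c * μ.real {y | c ≤ f y} ≤ ∫ y, Real.exp (f y) ∂μ := by
    simpa only [Real.exp_le_exp] using
      mul_meas_ge_le_integral_of_nonneg (ae_of_all _ fun y ↦ (Real.exp_pos (f y)).le) hf
        (Real.exp c)
  rw [expDensity, average_eq, smul_eq_mul, Real.exp_sub]
  calc Real.exp (f x) / ((μ.real univ)⁻¹ * ∫ y, Real.exp (f y) ∂μ)
      = μ.real univ * Real.exp (f x) / ∫ y, Real.exp (f y) ∂μ := by
        rw [div_mul_eq_div_div, div_inv_eq_mul, mul_comm]
    _ ≤ μ.real univ * Real.exp (f x) / (Real.exp c * μ.real {y | c ≤ f y}) := by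
        gcongr
    _ = μ.real univ / μ.real {y | c ≤ f y} * (Real.exp (f x) / Real.exp c) := by
        rw [mul_comm (Real.exp c), mul_div_mul_comm]

theorem tendsto_expDensity_atTop [IsFiniteMeasure μ]
    (hf : ∀ t : ℝ, Integrable (fun x ↦ Real.exp (t * f x)) μ) {x : α} {c : ℝ} (hxc : f x < c)
    (hc : μ {y | c ≤ f y} ≠ 0) :
    Tendsto (fun t : ℝ ↦ expDensity μ (fun y ↦ t * f y) x) atTop (𝓝 0) := by
  have hexp : Tendsto (fun t : ℝ ↦ Real.exp (t * f x - t * c)) atTop (𝓝 0) := by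
    simp_rw [← mul_sub]
    exact Real.tendsto_exp_atBot.comp (tendsto_id.atTop_mul_const_of_neg (sub_neg.2 hxc))
  have hbound := hexp.const_mul (μ.real univ / μ.real {y | c ≤ f y})
  rw [mul_zero] at hbound
  refine tendsto_of_tendsto_of_tendsto_of_le_of_le' tendsto_const_nhds hbound
    (.of_forall fun t ↦ expDensity_nonneg x) ?_
  filter_upwards [eventually_gt_atTop 0] with t ht
  have hlevel : {y | t * c ≤ t * f y} = {y | c ≤ f y} := by
    simp only [mul_le_mul_iff_right₀ ht]
  have h := expDensity_le (hf t) (hlevel ▸ hc) x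
  rwa [hlevel] at h

theorem convexOn_expDensity {E : Type*} [AddCommGroup E] [Module ℝ E] [MeasurableSpace E]
    {ν : Measure E} {f : E → ℝ} {s : Set E} (hf : ConvexOn ℝ s f) :
    ConvexOn ℝ s (expDensity ν f) := by
  have hexp : ConvexOn ℝ s fun x ↦ Real.exp (f x) :=
    ⟨hf.1, fun x hx y hy a b ha hb hab ↦ (Real.exp_monotone (hf.2 hx hy ha hb hab)).trans
      (convexOn_exp.2 (mem_univ (f x)) (mem_univ (f y)) ha hb hab)⟩
  refine (hexp.smul (inv_nonneg.2 (average_exp_nonneg (μ := ν) (f := f)))).congr fun x _ ↦ ?_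
  simp only [expDensity, smul_eq_mul, div_eq_inv_mul]

end ExpDensity

/-- The extremal quotient: the `L¹` norm of `φ` on `P`, relative to `μ(P)` times the depth
`-inf_P φ`. If `φ` is unbounded below on `P`, then `sInf (φ '' P) = 0` and the value is `0`. -/
noncomputable def l1InfRatio {α : Type*} [MeasurableSpace α] (μ : Measure α) (P : Set α)
    (φ : α → ℝ) : ℝ :=
  (∫ x in P, |φ x| ∂μ) / (-(μ.real P * sInf (φ '' P)))

theorem eventually_sInf_image_neg {ι α : Type*} {l : Filter ι} {P : Set α} {φ : ι → α → ℝ}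
    {x : α} {a : ℝ} (hx : x ∈ P) (hbdd : ∀ i, BddBelow (φ i '' P)) (ha : a < 0)
    (hlim : Tendsto (φ · x) l (𝓝 a)) : ∀ᶠ i in l, sInf (φ i '' P) < 0 := by
  filter_upwards [hlim.eventually_lt_const ha] with i hi
  exact (csInf_le (hbdd i) (mem_image_of_mem (φ i) hx)).trans_lt hi

section Ratio

variable {α : Type*} [MeasurableSpace α] {μ : Measure α} {P : Set α} {φ : α → ℝ}

theorem l1InfRatio_lt_two (hP : MeasurableSet P) (hP₀ : μ P ≠ 0) (hPtop : μ P ≠ ⊤)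
    (hφ : IntegrableOn φ P μ) (hmean : ∫ x in P, φ x ∂μ = 0) (hneg : sInf (φ '' P) < 0) :
    l1InfRatio μ P φ < 2 := by
  have : IsFiniteMeasure (μ.restrict P) := isFiniteMeasure_restrict.2 hPtop
  have : NeZero (μ.restrict P) := ⟨by simpa using hP₀⟩
  have hV : 0 < μ.real P := ENNReal.toReal_pos hP₀ hPtop
  have hbdd : BddBelow (φ '' P) := by
    by_contra h
    exact hneg.ne (Real.sInf_of_not_bddBelow h)
  have hle : ∀ᵐ x ∂μ.restrict P, -(-sInf (φ '' P)) ≤ φ x := by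
    filter_upwards [ae_restrict_mem hP] with x hx
    rw [neg_neg]
    exact csInf_le hbdd (mem_image_of_mem φ hx)
  have h := integral_abs_lt_of_neg_le (neg_pos.2 hneg) hφ hmean hle
  rw [measureReal_restrict_apply_univ] at h
  rw [l1InfRatio, div_lt_iff₀ (neg_pos.2 (mul_neg_of_pos_of_neg hV hneg))]
  linarith

theorem integral_abs_div_le_l1InfRatio (hne : P.Nonempty) (hle : ∀ x ∈ P, -1 ≤ φ x)
    (hneg : sInf (φ '' P) < 0) : (∫ x in P, |φ x| ∂μ) / μ.real P ≤ l1InfRatio μ P φ := by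
  have hinf : -1 ≤ sInf (φ '' P) := le_csInf (hne.image φ) (forall_mem_image.2 hle)
  have habs : 0 ≤ (∫ x in P, |φ x| ∂μ) / μ.real P :=
    div_nonneg (integral_nonneg fun _ ↦ abs_nonneg _) measureReal_nonneg
  rw [l1InfRatio, ← mul_neg, div_mul_eq_div_div]
  exact le_div_self habs (neg_pos.2 hneg) (by linarith)

theorem tendsto_l1InfRatio {ι : Type*} {l : Filter ι} [l.IsCountablyGenerated] {φ : ι → α → ℝ}
    (hP : MeasurableSet P) (hP₀ : μ P ≠ 0) (hPtop : μ P ≠ ⊤)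
    (hφ : ∀ i, IntegrableOn (φ i) P μ) (hmean : ∀ i, ∫ x in P, φ i x ∂μ = 0)
    (hle : ∀ i, ∀ x ∈ P, -1 ≤ φ i x) (hlim : ∀ x ∈ P, Tendsto (φ · x) l (𝓝 (-1))) :
    Tendsto (fun i ↦ l1InfRatio μ P (φ i)) l (𝓝 2) := by
  have : IsFiniteMeasure (μ.restrict P) := isFiniteMeasure_restrict.2 hPtop
  have hV : μ.real P ≠ 0 := (ENNReal.toReal_pos hP₀ hPtop).ne'
  have hne : P.Nonempty := nonempty_of_measure_ne_zero hP₀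
  have hneg : ∀ᶠ i in l, sInf (φ i '' P) < 0 :=
    eventually_sInf_image_neg hne.some_mem (fun i ↦ ⟨-1, forall_mem_image.2 (hle i)⟩)
      neg_one_lt_zero (hlim _ hne.some_mem)
  have hlower : Tendsto (fun i ↦ (∫ x in P, |φ i x| ∂μ) / μ.real P) l (𝓝 2) := by
    have h := (tendsto_integral_abs_of_tendsto_neg zero_le_one hφ hmean
      (fun i ↦ ae_restrict_of_forall_mem hP (hle i))
      (ae_restrict_of_forall_mem hP hlim)).div_const (μ.real P)
    rwa [measureReal_restrict_apply_univ, mul_one, mul_div_cancel_right₀ _ hV] at h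
  refine tendsto_of_tendsto_of_tendsto_of_le_of_le' hlower tendsto_const_nhds ?_ ?_
  · exact hneg.mono fun i hi ↦ integral_abs_div_le_l1InfRatio hne (hle i) hi
  · exact hneg.mono fun i hi ↦ (l1InfRatio_lt_two hP hP₀ hPtop (hφ i) (hmean i) hi).le

end Ratio

theorem exists_mem_lt_apply_of_isOpen {E : Type*} [AddCommGroup E] [Module ℝ E]
    [TopologicalSpace E] [ContinuousAdd E] [ContinuousSMul ℝ E] {f : StrongDual ℝ E} (hf : f ≠ 0)
    {P : Set E} (hP : IsOpen P) {x : E} (hx : x ∈ P) : ∃ y ∈ P, f x < f y := by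
  have hnhds : f '' P ∈ 𝓝 (f x) := (f.isOpenMap_of_ne_zero hf).image_mem_nhds (hP.mem_nhds hx)
  obtain ⟨_, hlt, y, hy, rfl⟩ := ((frequently_gt_nhds (f x)).and_eventually hnhds).exists
  exact ⟨y, hy, hlt⟩

section Functional

variable {E : Type*} [NormedAddCommGroup E] [NormedSpace ℝ E] [MeasurableSpace E]
  [OpensMeasurableSpace E] {μ : Measure E} {P : Set E}

theorem integrableOn_exp_mul_of_isBounded (hP : MeasurableSet P) (hb : Bornology.IsBounded P)
    (hPtop : μ P ≠ ⊤) (f : StrongDual ℝ E) (t : ℝ) :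
    IntegrableOn (fun x ↦ Real.exp (t * f x)) P μ := by
  have : IsFiniteMeasure (μ.restrict P) := isFiniteMeasure_restrict.2 hPtop
  have hIcc := (f.lipschitz.isBounded_image hb).subset_Icc_sInf_sSup
  exact ProbabilityTheory.integrable_exp_mul_of_mem_Icc f.continuous.aemeasurable
    (ae_restrict_of_forall_mem hP fun x hx ↦ hIcc (mem_image_of_mem f hx))

theorem tendsto_expDensity_of_isOpen [μ.IsOpenPosMeasure] (hP : IsOpen P)
    (hb : Bornology.IsBounded P) (hPtop : μ P ≠ ⊤) {f : StrongDual ℝ E} (hf : f ≠ 0) {x : E}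
    (hx : x ∈ P) :
    Tendsto (fun t : ℝ ↦ expDensity (μ.restrict P) (fun y ↦ t * f y) x) atTop (𝓝 0) := by
  have : IsFiniteMeasure (μ.restrict P) := isFiniteMeasure_restrict.2 hPtop
  obtain ⟨y, hy, hxy⟩ := exists_mem_lt_apply_of_isOpen hf hP hx
  obtain ⟨z, hz, hyz⟩ := exists_mem_lt_apply_of_isOpen hf hP hy
  refine tendsto_expDensity_atTop
    (integrableOn_exp_mul_of_isBounded hP.measurableSet hb hPtop f) hxy ?_
  have hopen : IsOpen ({w | f y < f w} ∩ P) := (isOpen_lt continuous_const f.continuous).inter hP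
  have hpos : 0 < μ ({w | f y < f w} ∩ P) := hopen.measure_pos μ ⟨z, hyz, hz⟩
  rw [Measure.restrict_apply (measurableSet_le measurable_const f.continuous.measurable)]
  have hsub : {w | f y < f w} ⊆ {w | f y ≤ f w} := fun w (hw : f y < f w) ↦ hw.le
  exact (hpos.trans_le (measure_mono (inter_subset_inter_left P hsub))).ne'

end Functional

/-- The values of `l1InfRatio μ P` on the convex integrable functions on `P` with mean zero and
negative infimum. -/
def centeredConvexRatios {E : Type*} [AddCommGroup E] [Module ℝ E] [MeasurableSpace E]
    (μ : Measure E) (P : Set E) : Set ℝ :=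
  {r : ℝ | ∃ φ : E → ℝ, ConvexOn ℝ P φ ∧ IntegrableOn φ P μ ∧ (∫ x in P, φ x ∂μ) = 0 ∧
    sInf (φ '' P) < 0 ∧ r = l1InfRatio μ P φ}

section Supremum

variable {E : Type*} [NormedAddCommGroup E] [NormedSpace ℝ E] [MeasurableSpace E]
  [OpensMeasurableSpace E] {μ : Measure E} [μ.IsOpenPosMeasure] {P : Set E}

theorem two_mem_closure_centeredConvexRatios [Nontrivial E] (hopen : IsOpen P)
    (hconv : Convex ℝ P) (hb : Bornology.IsBounded P) (hne : P.Nonempty) (hPtop : μ P ≠ ⊤) :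
    2 ∈ closure (centeredConvexRatios μ P) := by
  have hP₀ : μ P ≠ 0 := (hopen.measure_pos μ hne).ne'
  have : IsFiniteMeasure (μ.restrict P) := isFiniteMeasure_restrict.2 hPtop
  have : NeZero (μ.restrict P) := ⟨by simpa using hP₀⟩
  obtain ⟨f, hf⟩ := exists_ne (0 : StrongDual ℝ E)
  have hexp := integrableOn_exp_mul_of_isBounded hopen.measurableSet hb hPtop f
  let φ (t : ℝ) (x : E) : ℝ := expDensity (μ.restrict P) (fun y ↦ t * f y) x + -1
  have hφconv (t : ℝ) : ConvexOn ℝ P (φ t) :=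
    (convexOn_expDensity ((t • f).toLinearMap.convexOn hconv)).add_const (-1)
  have hφint (t : ℝ) : IntegrableOn (φ t) P μ :=
    (integrable_expDensity (hexp t)).add (integrable_const _)
  have hφmean (t : ℝ) : ∫ x in P, φ t x ∂μ = 0 := by
    rw [integral_add (integrable_expDensity (hexp t)) (integrable_const _),
      integral_expDensity (hexp t), integral_const, smul_eq_mul, mul_neg_one, add_neg_cancel]
  have hφle (t : ℝ) : ∀ x ∈ P, -1 ≤ φ t x := fun x _ ↦
    le_add_of_nonneg_left (expDensity_nonneg x)
  have hφlim : ∀ x ∈ P, Tendsto (φ · x) atTop (𝓝 (-1)) := fun x hx ↦ by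
    simpa only [zero_add] using
      (tendsto_expDensity_of_isOpen hopen hb hPtop hf hx).add_const (-1)
  have hφneg : ∀ᶠ t in atTop, sInf (φ t '' P) < 0 :=
    eventually_sInf_image_neg hne.some_mem (fun t ↦ ⟨-1, forall_mem_image.2 (hφle t)⟩)
      neg_one_lt_zero (hφlim _ hne.some_mem)
  refine mem_closure_of_tendsto
    (tendsto_l1InfRatio hopen.measurableSet hP₀ hPtop hφint hφmean hφle hφlim) ?_
  exact hφneg.mono fun t ht ↦ ⟨φ t, hφconv t, hφint t, hφmean t, ht, rfl⟩

theorem lt_two_of_mem_centeredConvexRatios (hopen : IsOpen P) (hne : P.Nonempty)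
    (hPtop : μ P ≠ ⊤) {r : ℝ} (hr : r ∈ centeredConvexRatios μ P) : r < 2 := by
  obtain ⟨φ, -, hφ, hmean, hneg, rfl⟩ := hr
  exact l1InfRatio_lt_two hopen.measurableSet (hopen.measure_pos μ hne).ne' hPtop hφ hmean hneg

theorem stmt_10_general [Nontrivial E] (hopen : IsOpen P) (hconv : Convex ℝ P)
    (hb : Bornology.IsBounded P) (hne : P.Nonempty) (hPtop : μ P ≠ ⊤) :
    IsLUB (centeredConvexRatios μ P) 2 ∧ 2 ∉ centeredConvexRatios μ P := by
  have hlt : ∀ r ∈ centeredConvexRatios μ P, r < 2 := fun _ ↦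
    lt_two_of_mem_centeredConvexRatios hopen hne hPtop
  exact ⟨isLUB_of_mem_closure (fun r hr ↦ (hlt r hr).le)
    (two_mem_closure_centeredConvexRatios hopen hconv hb hne hPtop), fun h ↦ (hlt 2 h).false⟩

end Supremum

/-- On the open unit cube `P = (0,1)^n`, the supremum of the ratios
`(∫_P |φ|)/(-μ(P) inf_P φ)` over all centered convex integrable `φ` with negative infimum
equals `2`, and it is not attained. -/
theorem stmt_10 (n : ℕ) (hn : 1 ≤ n)
    (P : Set (Fin n → ℝ))
    (hP : P = Set.univ.pi fun _ : Fin n => Set.Ioo (0 : ℝ) 1)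
    (S : Set ℝ)
    (hS : S = {r : ℝ | ∃ φ : (Fin n → ℝ) → ℝ,
      ConvexOn ℝ P φ ∧ IntegrableOn φ P volume ∧ (∫ x in P, φ x) = 0 ∧
      sInf (φ '' P) < 0 ∧
      r = (∫ x in P, |φ x|) / (-((volume P).toReal * sInf (φ '' P)))}) :
    IsLUB S 2 ∧ 2 ∉ S := by
  have : Nonempty (Fin n) := ⟨⟨0, hn⟩⟩
  have hb : Bornology.IsBounded P := hP ▸ .pi fun _ ↦ Metric.isBounded_Ioo 0 1
  subst hP hS
  exact stmt_10_general (isOpen_set_pi finite_univ fun _ _ ↦ isOpen_Ioo)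
    (convex_pi fun _ _ ↦ convex_Ioo 0 1) hb
    (univ_pi_nonempty_iff.2 fun _ ↦ nonempty_Ioo.2 one_pos) hb.measure_lt_top.ne
end
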